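/- If S | F ~ S | R, S ⫫ F, and S ▷ R, then F ~ R. -/

import Mathlib

namespace CCS

/-- Process terms over a set of actions `A`. -/
inductive Proc (A : Type) where
  | nil : Proc A
  | pre : A → Proc A → Proc A
  | par : Proc A → Proc A → Proc A
  | repl : A → Proc A → Proc A

namespace Proc

/-- Finite processes: no occurrence of replication. -/
def IsFin {A : Type} : Proc A → Prop
  | nil => True
  | pre _ p => IsFin p
  | par p q => IsFin p ∧ IsFin q
  | repl _ _ => False

/-- Processes of the calculus: replication is applied only to prefixed
finite processes, at top level. -/
def Wf {A : Type} : Proc A → Prop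
  | nil => True
  | pre _ p => IsFin p
  | par p q => Wf p ∧ Wf q
  | repl _ p => IsFin p

/-- Size: the number of prefixes. -/
def size {A : Type} : Proc A → ℕ
  | nil => 0
  | pre _ p => size p + 1
  | par p q => size p + size q
  | repl _ p => size p + 1

/-- `reps n p` is the parallel composition of `n` copies of `p`. -/
def reps {A : Type} : ℕ → Proc A → Proc A
  | 0, _ => nil
  | n+1, p => par p (reps n p)

/-- `bang F` is `!F`: for `F = α₁.F₁ | ... | αk.Fk` it is `!α₁.F₁ | ... | !αk.Fk`. -/
def bang {A : Type} : Proc A → Proc A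
  | nil => nil
  | pre a p => repl a p
  | par p q => par (bang p) (bang q)
  | repl a p => repl a p

end Proc

/-- The labelled transition system (no synchronisation). -/
inductive Step {A : Type} : Proc A → A → Proc A → Prop where
  | pre {a : A} {p : Proc A} : Step (Proc.pre a p) a p
  | repl {a : A} {p : Proc A} :
      Step (Proc.repl a p) a (Proc.par (Proc.repl a p) p)
  | parL {p : Proc A} {a : A} {p' : Proc A} (q : Proc A) :
      Step p a p' → Step (Proc.par p q) a (Proc.par p' q)
  | parR {q : Proc A} {a : A} {q' : Proc A} (p : Proc A) :
      Step q a q' → Step (Proc.par p q) a (Proc.par p q')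

/-- Strong bisimulations. -/
def IsBisim {A : Type} (R : Proc A → Proc A → Prop) : Prop :=
  Symmetric R ∧
    ∀ p q, R p q → ∀ a p', Step p a p' → ∃ q', Step q a q' ∧ R p' q'

/-- Strong bisimilarity `~`: the greatest strong bisimulation. -/
def Bisim {A : Type} (p q : Proc A) : Prop :=
  ∃ R, IsBisim R ∧ R p q

/-- The congruence `≡D`: the smallest congruence generated by the abelian
monoid laws for parallel composition (neutral element `0`) and the
distribution law `α.(F | α.F | ... | α.F) = α.F | α.F | ... | α.F`
(with as many occurrences of `F` on both sides). -/
inductive EqD {A : Type} : Proc A → Proc A → Prop where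
  | refl (p : Proc A) : EqD p p
  | symm {p q : Proc A} : EqD p q → EqD q p
  | trans {p q r : Proc A} : EqD p q → EqD q r → EqD p r
  | parComm (p q : Proc A) : EqD (Proc.par p q) (Proc.par q p)
  | parAssoc (p q r : Proc A) :
      EqD (Proc.par (Proc.par p q) r) (Proc.par p (Proc.par q r))
  | parNil (p : Proc A) : EqD (Proc.par p Proc.nil) p
  | distr (a : A) (F : Proc A) (n : ℕ) (hF : F.IsFin) :
      EqD (Proc.pre a (Proc.par F (Proc.reps n (Proc.pre a F))))
          (Proc.reps (n + 1) (Proc.pre a F))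
  | congPre (a : A) {p q : Proc A} : EqD p q → EqD (Proc.pre a p) (Proc.pre a q)
  | congPar {p p' q q' : Proc A} :
      EqD p p' → EqD q q' → EqD (Proc.par p q) (Proc.par p' q')
  | congRepl (a : A) {p q : Proc A} : EqD p q → EqD (Proc.repl a p) (Proc.repl a q)

/-- Finite (single-hole) contexts `D ::= [] | α.D | D|F`. -/
inductive FCtx (A : Type) where
  | hole : FCtx A
  | pre : A → FCtx A → FCtx A
  | par : FCtx A → Proc A → FCtx A

/-- Filling the hole of a finite context. -/
def FCtx.fill {A : Type} : FCtx A → Proc A → Proc A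
  | .hole, p => p
  | .pre a d, p => Proc.pre a (d.fill p)
  | .par d f, p => Proc.par (d.fill p) f

/-- Well-formedness of a finite context: the processes placed in parallel
are finite. -/
def FCtx.Wf {A : Type} : FCtx A → Prop
  | .hole => True
  | .pre _ d => d.Wf
  | .par d f => d.Wf ∧ f.IsFin

/-- Single-hole contexts `C ::= D | !α.D | C|P` (the hole never occurs
directly under a replication). -/
inductive Ctx (A : Type) where
  | ofD : FCtx A → Ctx A
  | repl : A → FCtx A → Ctx A
  | par : Ctx A → Proc A → Ctx A

/-- Filling the hole of a context. -/
def Ctx.fill {A : Type} : Ctx A → Proc A → Proc A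
  | .ofD d, p => d.fill p
  | .repl a d, p => Proc.repl a (d.fill p)
  | .par c q, p => Proc.par (c.fill p) q

/-- Well-formedness of a context. -/
def Ctx.Wf {A : Type} : Ctx A → Prop
  | .ofD d => d.Wf
  | .repl _ d => d.Wf
  | .par c p => c.Wf ∧ p.Wf

/-- `k` consecutive transitions. -/
inductive NSteps {A : Type} : Proc A → ℕ → Proc A → Prop where
  | zero (p : Proc A) : NSteps p 0 p
  | succ {p : Proc A} {a : A} {p' : Proc A} {k : ℕ} {q : Proc A} :
      Step p a p' → NSteps p' k q → NSteps p (k + 1) q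

/-- `P ⇒k Q`: `k` transitions from `P` reach a process `≡D Q`. -/
def Reduct {A : Type} (p : Proc A) (k : ℕ) (q : Proc A) : Prop :=
  ∃ p', NSteps p k p' ∧ EqD p' q

/-- `TopRepl S a G` holds when `!a.G` is one of the (top-level) replicated
parallel components of `S`. -/
inductive TopRepl {A : Type} : Proc A → A → Proc A → Prop where
  | repl (a : A) (p : Proc A) : TopRepl (Proc.repl a p) a p
  | parL {p : Proc A} {a : A} {r : Proc A} (q : Proc A) :
      TopRepl p a r → TopRepl (Proc.par p q) a r
  | parR {q : Proc A} {a : A} {r : Proc A} (p : Proc A) :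
      TopRepl q a r → TopRepl (Proc.par p q) a r

/-- `S` has only replicated components: `S = ∏i !αi.Si`. -/
def ReplOnly {A : Type} : Proc A → Prop
  | .nil => True
  | .pre _ _ => False
  | .par p q => ReplOnly p ∧ ReplOnly q
  | .repl _ p => p.IsFin

/-- `S ⫫ F` : for no component `!αi.Si` of `S` and no `k` do we have
`F ⇒k αi.Si`. -/
def Dis {A : Type} (S F : Proc A) : Prop :=
  ∀ a G, TopRepl S a G → ∀ k, ¬ Reduct F k (Proc.pre a G)

/-- `S ▷ R` : there is `k > 0` with `S ⇒k S | R`. -/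
def Purg {A : Type} (S R : Proc A) : Prop :=
  ∃ k, 0 < k ∧ Reduct S k (Proc.par S R)

/-- A process is a seed if no (well-formed) process of strictly smaller
size is bisimilar to it. -/
def IsSeed {A : Type} (p : Proc A) : Prop :=
  p.Wf ∧ ∀ q : Proc A, q.Wf → Bisim q p → p.size ≤ q.size

/-- The rewriting relation `⤳_T` (first argument), defined modulo `≡D` by
the axioms (B1) `C[α.F] ⤳_{!α.F|F'} C[0]` and (B2) `!α.F | !α.F | P ⤳_Q !α.F | P`. -/
inductive Rw {A : Type} : Proc A → Proc A → Proc A → Prop where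
  | B1 {a : A} {F F' : Proc A} (C : Ctx A) :
      F.IsFin → F'.Wf → C.Wf →
      Rw (Proc.par (Proc.repl a F) F') (C.fill (Proc.pre a F)) (C.fill Proc.nil)
  | B2 {a : A} {F P Q : Proc A} :
      F.IsFin → P.Wf → Q.Wf →
      Rw Q (Proc.par (Proc.repl a F) (Proc.par (Proc.repl a F) P))
           (Proc.par (Proc.repl a F) P)
  | eqD {T T' P P' Q Q' : Proc A} :
      EqD T T' → EqD P P' → Rw T' P' Q' → EqD Q Q' → Rw T P Q

/-- `⤳*_T` : the reflexive transitive closure of `⤳_T`. -/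
def RwStar {A : Type} (T : Proc A) : Proc A → Proc A → Prop :=
  Relation.ReflTransGen (Rw T)

/-- Convertibility `P ⋈ Q`: some process `T` satisfies `P ⤳*_T T` and `Q ⤳*_T T`. -/
def Convert {A : Type} (P Q : Proc A) : Prop :=
  ∃ T : Proc A, T.Wf ∧ RwStar T P T ∧ RwStar T Q T

/-- `∏i αi.Fi` for a list of prefixed components. -/
def prodPre {A : Type} (l : List (A × Proc A)) : Proc A :=
  (l.map fun x => Proc.pre x.1 x.2).foldr Proc.par Proc.nil

/-- `∏i !αi.Fi` for a list of prefixed components. -/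
def bangProd {A : Type} (l : List (A × Proc A)) : Proc A :=
  (l.map fun x => Proc.repl x.1 x.2).foldr Proc.par Proc.nil

end CCS


namespace CCS
open Proc
variable {A : Type}

theorem Bisim.refl (p : Proc A) : Bisim p p :=
  ⟨fun x y => x = y, ⟨fun _ _ h => h.symm, by
    rintro p q rfl a p' h; exact ⟨p', h, rfl⟩⟩, rfl⟩

theorem Bisim.symm {p q : Proc A} : Bisim p q → Bisim q p := by
  rintro ⟨R, hR, h⟩; exact ⟨R, hR, hR.1 h⟩

theorem Bisim.step {p q : Proc A} (h : Bisim p q) {a : A} {p' : Proc A} (hs : Step p a p') :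
    ∃ q', Step q a q' ∧ Bisim p' q' := by
  obtain ⟨R, hR, h⟩ := h
  obtain ⟨q', h1, h2⟩ := hR.2 p q h a p' hs
  exact ⟨q', h1, R, hR, h2⟩

theorem Bisim.trans {p q r : Proc A} (h1 : Bisim p q) (h2 : Bisim q r) : Bisim p r := by
  refine ⟨fun x z => ∃ y, Bisim x y ∧ Bisim y z, ⟨?_, ?_⟩, q, h1, h2⟩
  · rintro x z ⟨y, h, h'⟩; exact ⟨y, h'.symm, h.symm⟩
  · rintro x z ⟨y, h, h'⟩ a x' hs
    obtain ⟨y', hy, hb⟩ := h.step hs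
    obtain ⟨z', hz, hb'⟩ := h'.step hy
    exact ⟨z', hz, y', hb, hb'⟩

/-- Coinduction, up to bisimilarity, with a relation that need not be symmetric. -/
theorem Bisim.coind (R : Proc A → Proc A → Prop)
    (h1 : ∀ p q, R p q → ∀ a p', Step p a p' →
      ∃ q', Step q a q' ∧ ∃ u v, Bisim p' u ∧ R u v ∧ Bisim v q')
    (h2 : ∀ p q, R p q → ∀ a q', Step q a q' →
      ∃ p', Step p a p' ∧ ∃ u v, Bisim p' u ∧ R u v ∧ Bisim v q')
    {p q : Proc A} (h : R p q) : Bisim p q := by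
  refine ⟨fun x y => ∃ u v, Bisim x u ∧ (R u v ∨ R v u) ∧ Bisim v y, ⟨?_, ?_⟩,
    p, q, .refl _, .inl h, .refl _⟩
  · rintro x y ⟨u, v, h, h', h''⟩; exact ⟨v, u, h''.symm, h'.symm, h.symm⟩
  · rintro x y ⟨u, v, h, h', h''⟩ a x' hs
    obtain ⟨u', hu, hb⟩ := h.step hs
    rcases h' with h' | h'
    · obtain ⟨v', hv, w, z, b1, b2, b3⟩ := h1 u v h' a u' hu
      obtain ⟨y', hy, hb'⟩ := h''.step hv
      exact ⟨y', hy, w, z, hb.trans b1, .inl b2, b3.trans hb'⟩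
    · obtain ⟨v', hv, w, z, b1, b2, b3⟩ := h2 v u h' a u' hu
      obtain ⟨y', hy, hb'⟩ := h''.step hv
      exact ⟨y', hy, z, w, hb.trans b3.symm, .inr b2, b1.symm.trans hb'⟩

theorem bisim_comm (p q : Proc A) : Bisim (par p q) (par q p) := by
  refine ⟨fun x y => ∃ p q, x = par p q ∧ y = par q p, ⟨?_, ?_⟩, p, q, rfl, rfl⟩
  · rintro x y ⟨p, q, rfl, rfl⟩; exact ⟨q, p, rfl, rfl⟩
  · rintro x y ⟨p, q, rfl, rfl⟩ a x' hs
    cases hs with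
    | parL _ h => exact ⟨_, .parR _ h, _, _, rfl, rfl⟩
    | parR _ h => exact ⟨_, .parL _ h, _, _, rfl, rfl⟩

theorem bisim_assoc (p q r : Proc A) : Bisim (par (par p q) r) (par p (par q r)) := by
  refine Bisim.coind (fun x y => ∃ p q r, x = par (par p q) r ∧ y = par p (par q r))
    ?_ ?_ ⟨p, q, r, rfl, rfl⟩
  · rintro x y ⟨p, q, r, rfl, rfl⟩ a x' hs
    cases hs with
    | parL _ h =>
      cases h with
      | parL _ h => exact ⟨_, .parL _ h, _, _, .refl _, ⟨_, _, _, rfl, rfl⟩, .refl _⟩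
      | parR _ h => exact ⟨_, .parR _ (.parL _ h), _, _, .refl _, ⟨_, _, _, rfl, rfl⟩, .refl _⟩
    | parR _ h => exact ⟨_, .parR _ (.parR _ h), _, _, .refl _, ⟨_, _, _, rfl, rfl⟩, .refl _⟩
  · rintro x y ⟨p, q, r, rfl, rfl⟩ a x' hs
    cases hs with
    | parR _ h =>
      cases h with
      | parL _ h => exact ⟨_, .parL _ (.parR _ h), _, _, .refl _, ⟨_, _, _, rfl, rfl⟩, .refl _⟩
      | parR _ h => exact ⟨_, .parR _ h, _, _, .refl _, ⟨_, _, _, rfl, rfl⟩, .refl _⟩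
    | parL _ h => exact ⟨_, .parL _ (.parL _ h), _, _, .refl _, ⟨_, _, _, rfl, rfl⟩, .refl _⟩

theorem bisim_nil (p : Proc A) : Bisim (par p nil) p := by
  refine Bisim.coind (fun x y => x = par y nil) ?_ ?_ rfl
  · rintro x y rfl a x' hs
    cases hs with
    | parL _ h => exact ⟨_, h, _, _, .refl _, rfl, .refl _⟩
    | parR _ h => cases h
  · rintro x y rfl a x' hs
    exact ⟨_, .parL _ hs, _, _, .refl _, rfl, .refl _⟩

theorem bisim_par {p p' q q' : Proc A} (h : Bisim p p') (h' : Bisim q q') :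
    Bisim (par p q) (par p' q') := by
  refine ⟨fun x y => ∃ p q p' q', x = par p q ∧ y = par p' q' ∧ Bisim p p' ∧ Bisim q q',
    ⟨?_, ?_⟩, _, _, _, _, rfl, rfl, h, h'⟩
  · rintro x y ⟨p, q, p', q', rfl, rfl, h, h'⟩
    exact ⟨_, _, _, _, rfl, rfl, h.symm, h'.symm⟩
  · rintro x y ⟨p, q, p', q', rfl, rfl, h, h'⟩ a x' hs
    cases hs with
    | parL _ hs =>
      obtain ⟨r, hr, hb⟩ := h.step hs
      exact ⟨_, .parL _ hr, _, _, _, _, rfl, rfl, hb, h'⟩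
    | parR _ hs =>
      obtain ⟨r, hr, hb⟩ := h'.step hs
      exact ⟨_, .parR _ hr, _, _, _, _, rfl, rfl, h, hb⟩

/-- Processes up to bisimilarity. -/
def bisimSetoid (A : Type) : Setoid (Proc A) := ⟨Bisim, .refl, .symm, .trans⟩

/-- The quotient of processes by bisimilarity. -/
def QP (A : Type) := Quotient (bisimSetoid A)

/-- The class of a process. -/
def cls (p : Proc A) : QP A := Quotient.mk (bisimSetoid A) p

theorem cls_eq {p q : Proc A} : cls p = cls q ↔ Bisim p q :=
  ⟨fun h => Quotient.exact h, fun h => Quotient.sound (s := bisimSetoid A) h⟩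

theorem cls_surj (x : QP A) : ∃ p, cls p = x := Quotient.exists_rep x

/-- Addition of classes is parallel composition. -/
def qadd (x y : QP A) : QP A :=
  Quotient.map₂ (sa := bisimSetoid A) (sb := bisimSetoid A) (sc := bisimSetoid A) par
    (fun _ _ h _ _ h' => bisim_par h h') x y

instance : Add (QP A) := ⟨qadd⟩
instance : Zero (QP A) := ⟨cls nil⟩

theorem cls_par (p q : Proc A) : cls (par p q) = cls p + cls q := rfl
theorem cls_nil : cls (nil : Proc A) = 0 := rfl

instance : AddCommMonoid (QP A) where
  add_assoc x y z := by
    obtain ⟨p, rfl⟩ := cls_surj x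
    obtain ⟨q, rfl⟩ := cls_surj y
    obtain ⟨r, rfl⟩ := cls_surj z
    exact cls_eq.2 (bisim_assoc _ _ _)
  add_comm x y := by
    obtain ⟨p, rfl⟩ := cls_surj x
    obtain ⟨q, rfl⟩ := cls_surj y
    exact cls_eq.2 (bisim_comm _ _)
  add_zero x := by
    obtain ⟨p, rfl⟩ := cls_surj x
    exact cls_eq.2 (bisim_nil _)
  zero_add x := by
    obtain ⟨p, rfl⟩ := cls_surj x
    exact cls_eq.2 ((bisim_comm _ _).trans (bisim_nil _))
  nsmul := nsmulRec

/-- Transitions between classes. -/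
def QStep (x : QP A) (a : A) (y : QP A) : Prop :=
  ∃ p p', cls p = x ∧ Step p a p' ∧ cls p' = y

theorem qstep_cls {p : Proc A} {a : A} {y : QP A} :
    QStep (cls p) a y ↔ ∃ p', Step p a p' ∧ y = cls p' := by
  constructor
  · rintro ⟨q, q', h, hs, rfl⟩
    obtain ⟨p', h1, h2⟩ := (cls_eq.1 h).step hs
    exact ⟨p', h1, cls_eq.2 h2⟩
  · rintro ⟨p', h, rfl⟩; exact ⟨p, p', rfl, h, rfl⟩

theorem qcoind (R : QP A → QP A → Prop)
    (h1 : ∀ x y, R x y → ∀ a x', QStep x a x' → ∃ y', QStep y a y' ∧ R x' y')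
    (h2 : ∀ x y, R x y → ∀ a y', QStep y a y' → ∃ x', QStep x a x' ∧ R x' y')
    {x y : QP A} (h : R x y) : x = y := by
  obtain ⟨p, rfl⟩ := cls_surj x
  obtain ⟨q, rfl⟩ := cls_surj y
  refine cls_eq.2 (Bisim.coind (fun p q => R (cls p) (cls q)) ?_ ?_ h)
  · intro p q h a p' hs
    obtain ⟨y', hy, hr⟩ := h1 _ _ h a _ (qstep_cls.2 ⟨p', hs, rfl⟩)
    obtain ⟨q', hq, rfl⟩ := qstep_cls.1 hy
    exact ⟨q', hq, _, _, .refl _, hr, .refl _⟩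
  · intro p q h a p' hs
    obtain ⟨y', hy, hr⟩ := h2 _ _ h a _ (qstep_cls.2 ⟨p', hs, rfl⟩)
    obtain ⟨q', hq, rfl⟩ := qstep_cls.1 hy
    exact ⟨q', hq, _, _, .refl _, hr, .refl _⟩

theorem qext {x y : QP A} (h : ∀ a z, QStep x a z ↔ QStep y a z) : x = y := by
  refine qcoind (fun u v => u = v ∨ (u = x ∧ v = y)) ?_ ?_ (.inr ⟨rfl, rfl⟩)
  · rintro u v (rfl | ⟨rfl, rfl⟩) a z hz
    · exact ⟨z, hz, .inl rfl⟩
    · exact ⟨z, (h _ _).1 hz, .inl rfl⟩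
  · rintro u v (rfl | ⟨rfl, rfl⟩) a z hz
    · exact ⟨z, hz, .inl rfl⟩
    · exact ⟨z, (h _ _).2 hz, .inl rfl⟩

theorem qstep_add {x y z : QP A} {a : A} : QStep (x + y) a z ↔
    (∃ x', QStep x a x' ∧ z = x' + y) ∨ (∃ y', QStep y a y' ∧ z = x + y') := by
  obtain ⟨p, rfl⟩ := cls_surj x
  obtain ⟨q, rfl⟩ := cls_surj y
  rw [← cls_par, qstep_cls]
  constructor
  · rintro ⟨p', hs, rfl⟩
    cases hs with
    | parL _ h => exact .inl ⟨_, qstep_cls.2 ⟨_, h, rfl⟩, rfl⟩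
    | parR _ h => exact .inr ⟨_, qstep_cls.2 ⟨_, h, rfl⟩, rfl⟩
  · rintro (⟨x', h, rfl⟩ | ⟨x', h, rfl⟩)
    · obtain ⟨p', h2, rfl⟩ := qstep_cls.1 h
      exact ⟨_, .parL _ h2, rfl⟩
    · obtain ⟨p', h2, rfl⟩ := qstep_cls.1 h
      exact ⟨_, .parR _ h2, rfl⟩

theorem QStep.addL {x x' : QP A} {a : A} (h : QStep x a x') (y : QP A) :
    QStep (x + y) a (x' + y) := qstep_add.2 (.inl ⟨_, h, rfl⟩)

theorem QStep.addR {x x' : QP A} {a : A} (h : QStep x a x') (y : QP A) :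
    QStep (y + x) a (y + x') := qstep_add.2 (.inr ⟨_, h, rfl⟩)

theorem qstep_pre {a b : A} {p : Proc A} {z : QP A} :
    QStep (cls (pre a p)) b z ↔ b = a ∧ z = cls p := by
  rw [qstep_cls]
  constructor
  · rintro ⟨p', h, rfl⟩; cases h; exact ⟨rfl, rfl⟩
  · rintro ⟨rfl, rfl⟩; exact ⟨_, .pre, rfl⟩

theorem qstep_repl {a b : A} {p : Proc A} {z : QP A} :
    QStep (cls (repl a p)) b z ↔ b = a ∧ z = cls (repl a p) + cls p := by
  rw [qstep_cls]
  constructor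
  · rintro ⟨p', h, rfl⟩; cases h; exact ⟨rfl, rfl⟩
  · rintro ⟨rfl, rfl⟩; exact ⟨_, .repl, rfl⟩

theorem qstep_zero {a : A} {z : QP A} : ¬ QStep 0 a z := by
  rw [← cls_nil, qstep_cls]; rintro ⟨p', h, -⟩; cases h

theorem cls_pre_congr {a : A} {p q : Proc A} (h : cls p = cls q) :
    cls (pre a p) = cls (pre a q) := by
  apply qext; intro b z; rw [qstep_pre, qstep_pre, h]

theorem cls_pre_inj {a b : A} {p q : Proc A} (h : cls (pre a p) = cls (pre b q)) :
    a = b ∧ cls p = cls q := by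
  have : QStep (cls (pre b q)) a (cls p) := by rw [← h, qstep_pre]; exact ⟨rfl, rfl⟩
  rwa [qstep_pre] at this

theorem cls_repl_congr {a : A} {p q : Proc A} (h : cls p = cls q) :
    cls (repl a p) = cls (repl a q) := by
  refine qcoind (fun u v => ∃ w, u = cls (repl a p) + w ∧ v = cls (repl a q) + w) ?_ ?_
    ⟨0, by simp, by simp⟩
  · rintro _ _ ⟨w, rfl, rfl⟩ b z hz
    rcases qstep_add.1 hz with ⟨x', hx, rfl⟩ | ⟨w', hw, rfl⟩
    · obtain ⟨rfl, rfl⟩ := qstep_repl.1 hx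
      exact ⟨_, (qstep_repl.2 ⟨rfl, rfl⟩ : QStep (cls (repl b q)) _ _).addL _, cls p + w,
        by abel, by rw [h]; abel⟩
    · exact ⟨_, hw.addR _, _, rfl, rfl⟩
  · rintro _ _ ⟨w, rfl, rfl⟩ b z hz
    rcases qstep_add.1 hz with ⟨x', hx, rfl⟩ | ⟨w', hw, rfl⟩
    · obtain ⟨rfl, rfl⟩ := qstep_repl.1 hx
      exact ⟨_, (qstep_repl.2 ⟨rfl, rfl⟩ : QStep (cls (repl b p)) _ _).addL _, cls p + w,
        by abel, by rw [h]; abel⟩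
    · exact ⟨_, hw.addR _, _, rfl, rfl⟩

theorem cls_reps (n : ℕ) (p : Proc A) : cls (reps n p) = n • cls p := by
  induction n with
  | zero => rw [zero_nsmul]; rfl
  | succ n ih => rw [succ_nsmul, reps, cls_par, ih, add_comm]

theorem qstep_nsmul {n : ℕ} {x z : QP A} {a : A} :
    QStep ((n + 1) • x) a z ↔ ∃ x', QStep x a x' ∧ z = x' + n • x := by
  induction n generalizing z with
  | zero => simp
  | succ n ih =>
    rw [succ_nsmul, qstep_add]
    constructor
    · rintro (⟨y, h, rfl⟩ | ⟨y, h, rfl⟩)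
      · obtain ⟨x', h2, rfl⟩ := ih.1 h
        exact ⟨x', h2, by rw [succ_nsmul]; abel⟩
      · exact ⟨_, h, by abel⟩
    · rintro ⟨x', h, rfl⟩
      exact .inr ⟨_, h, by abel⟩

theorem cls_distr (a : A) (F : Proc A) (n : ℕ) :
    cls (pre a (par F (reps n (pre a F)))) = (n + 1) • cls (pre a F) := by
  apply qext; intro b z
  rw [qstep_nsmul, qstep_pre, cls_par, cls_reps]
  constructor
  · rintro ⟨rfl, rfl⟩; exact ⟨_, qstep_pre.2 ⟨rfl, rfl⟩, rfl⟩
  · rintro ⟨x', h, rfl⟩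
    obtain ⟨rfl, rfl⟩ := qstep_pre.1 h
    exact ⟨rfl, rfl⟩

theorem EqD.sound {p q : Proc A} (h : EqD p q) : cls p = cls q := by
  induction h with
  | refl => rfl
  | symm _ ih => exact ih.symm
  | trans _ _ h1 h2 => exact h1.trans h2
  | parComm p q => simp only [cls_par]; abel
  | parAssoc => simp only [cls_par]; abel
  | parNil => simp only [cls_par, cls_nil, add_zero]
  | distr a F n => rw [cls_distr, cls_reps]
  | congPre a _ ih => exact cls_pre_congr ih
  | congPar _ _ h1 h2 => simp only [cls_par, h1, h2]
  | congRepl a _ ih => exact cls_repl_congr ih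

/-! ### Finite processes and size -/

theorem IsFin.step {p p' : Proc A} {a : A} (hp : p.IsFin) (h : Step p a p') :
    p'.IsFin ∧ p.size = p'.size + 1 := by
  induction h with
  | pre => exact ⟨hp, rfl⟩
  | repl => exact hp.elim
  | parL q _ ih => exact ⟨⟨(ih hp.1).1, hp.2⟩, by have := (ih hp.1).2; simp only [size]; omega⟩
  | parR q _ ih => exact ⟨⟨hp.1, (ih hp.2).1⟩, by have := (ih hp.2).2; simp only [size]; omega⟩

theorem exists_step {p : Proc A} (h : p.size ≠ 0) : ∃ a p', Step p a p' := by
  induction p with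
  | nil => exact absurd rfl h
  | pre a p => exact ⟨_, _, .pre⟩
  | repl a p => exact ⟨_, _, .repl⟩
  | par p q ihp ihq =>
    by_cases hp : p.size = 0
    · obtain ⟨a, p', h⟩ := ihq (by simpa [size, hp] using h)
      exact ⟨_, _, .parR _ h⟩
    · obtain ⟨a, p', h⟩ := ihp hp
      exact ⟨_, _, .parL _ h⟩

theorem size_eq {p q : Proc A} (hp : p.IsFin) (hq : q.IsFin) (h : cls p = cls q) :
    p.size = q.size := by
  generalize hn : p.size = n
  induction n generalizing p q with
  | zero =>
    by_contra hne
    obtain ⟨a, q', hs⟩ := exists_step (Ne.symm hne)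
    obtain ⟨p', hs', -⟩ := (cls_eq.1 h).symm.step hs
    have := (IsFin.step hp hs').2
    omega
  | succ n ih =>
    obtain ⟨a, p', hs⟩ := exists_step (p := p) (by omega)
    obtain ⟨q', hs', hb⟩ := (cls_eq.1 h).step hs
    have h1 := IsFin.step hp hs
    have h2 := IsFin.step hq hs'
    have := ih h1.1 h2.1 (cls_eq.2 hb) (by omega)
    omega

/-- Classes of finite processes. -/
def QFin (x : QP A) : Prop := ∃ p : Proc A, p.IsFin ∧ cls p = x

open Classical in
/-- Size of the class of a finite process. -/
noncomputable def qsize (x : QP A) : ℕ :=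
  if h : QFin x then (Classical.choose h).size else 0

theorem qsize_cls {p : Proc A} (hp : p.IsFin) : qsize (cls p) = p.size := by
  have h : QFin (cls p) := ⟨p, hp, rfl⟩
  rw [qsize, dif_pos h]
  exact size_eq (Classical.choose_spec h).1 hp (Classical.choose_spec h).2

theorem qfin_zero : QFin (0 : QP A) := ⟨nil, trivial, rfl⟩

theorem QFin.add {x y : QP A} (hx : QFin x) (hy : QFin y) : QFin (x + y) := by
  obtain ⟨p, hp, rfl⟩ := hx
  obtain ⟨q, hq, rfl⟩ := hy
  exact ⟨par p q, ⟨hp, hq⟩, rfl⟩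

theorem qsize_add {x y : QP A} (hx : QFin x) (hy : QFin y) :
    qsize (x + y) = qsize x + qsize y := by
  obtain ⟨p, hp, rfl⟩ := hx
  obtain ⟨q, hq, rfl⟩ := hy
  rw [← cls_par, qsize_cls hp, qsize_cls hq, qsize_cls (p := par p q) ⟨hp, hq⟩]; rfl

theorem qsize_zero : qsize (0 : QP A) = 0 := qsize_cls (p := nil) trivial

theorem QFin.step {x y : QP A} {a : A} (hx : QFin x) (h : QStep x a y) :
    QFin y ∧ qsize x = qsize y + 1 := by
  obtain ⟨p, hp, rfl⟩ := hx
  obtain ⟨p', hs, rfl⟩ := qstep_cls.1 h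
  have := IsFin.step hp hs
  exact ⟨⟨p', this.1, rfl⟩, by rw [qsize_cls hp, qsize_cls this.1, this.2]⟩

theorem QFin.eq_zero {x : QP A} (hx : QFin x) (h : qsize x = 0) : x = 0 := by
  apply qext; intro a z
  refine ⟨fun hs => ?_, fun hs => (qstep_zero hs).elim⟩
  have := (hx.step hs).2; omega

theorem QFin.exists_step {x : QP A} (hx : QFin x) (h : x ≠ 0) : ∃ a y, QStep x a y := by
  by_contra hn
  push Not at hn
  exact h (qext fun a z => ⟨fun hs => (hn _ _ hs).elim, fun hs => (qstep_zero hs).elim⟩)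

end CCS


namespace CCS
open Proc
variable {A : Type}

/-! ### Unique decomposition of finite processes -/

/-- Prime (parallel-indecomposable) classes. -/
def QPrime (x : QP A) : Prop :=
  QFin x ∧ x ≠ 0 ∧ ∀ u v, QFin u → QFin v → x = u + v → u = 0 ∨ v = 0

theorem qfin_sum {s : Multiset (QP A)} (h : ∀ x ∈ s, QPrime x) : QFin s.sum := by
  induction s using Multiset.induction_on with
  | empty => exact qfin_zero
  | cons a s ih =>
    rw [Multiset.sum_cons]
    exact (h a (by simp)).1.add (ih fun x hx => h x (by simp [hx]))

theorem QPrime.size_pos {x : QP A} (h : QPrime x) : 0 < qsize x :=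
  Nat.pos_of_ne_zero fun h0 => h.2.1 (h.1.eq_zero h0)

theorem exists_dec (x : QP A) (hx : QFin x) :
    ∃ s : Multiset (QP A), (∀ y ∈ s, QPrime y) ∧ s.sum = x := by
  generalize hn : qsize x = n
  induction n using Nat.strong_induction_on generalizing x with
  | _ n ih =>
  by_cases h0 : x = 0
  · exact ⟨0, by simp, by simp [h0]⟩
  by_cases hp : QPrime x
  · exact ⟨{x}, by simpa using hp, by simp⟩
  · have : ∃ u v, QFin u ∧ QFin v ∧ x = u + v ∧ u ≠ 0 ∧ v ≠ 0 := by
      by_contra hne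
      push Not at hne
      refine hp ⟨hx, h0, fun u v hu hv he => ?_⟩
      by_cases hu0 : u = 0
      · exact .inl hu0
      · exact .inr (hne u v hu hv he hu0)
    obtain ⟨u, v, hu, hv, rfl, hu0, hv0⟩ := this
    have e := qsize_add hu hv
    have : qsize u ≠ 0 := fun h => hu0 (hu.eq_zero h)
    have : qsize v ≠ 0 := fun h => hv0 (hv.eq_zero h)
    obtain ⟨s, hs, rfl⟩ := ih (qsize u) (by omega) u hu rfl
    obtain ⟨t, ht, rfl⟩ := ih (qsize v) (by omega) v hv rfl
    refine ⟨s + t, ?_, by simp⟩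
    intro y hy
    rcases Multiset.mem_add.1 hy with hy | hy
    · exact hs y hy
    · exact ht y hy

open Classical in
/-- A decomposition into primes. -/
noncomputable def dec (x : QP A) : Multiset (QP A) :=
  if h : QFin x then Classical.choose (exists_dec x h) else 0

theorem dec_prime {x : QP A} (y : QP A) (hy : y ∈ dec x) : QPrime y := by
  unfold dec at hy
  split_ifs at hy with h
  · exact (Classical.choose_spec (exists_dec x h)).1 y hy
  · simp at hy

theorem dec_sum {x : QP A} (hx : QFin x) : (dec x).sum = x := by
  rw [dec, dif_pos hx]; exact (Classical.choose_spec (exists_dec x hx)).2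

theorem qsize_le_sum {s : Multiset (QP A)} (h : ∀ x ∈ s, QPrime x) {y : QP A} (hy : y ∈ s) :
    qsize y ≤ qsize s.sum := by
  obtain ⟨t, rfl⟩ := Multiset.exists_cons_of_mem hy
  rw [Multiset.sum_cons, qsize_add (h y hy).1 (qfin_sum fun x hx => h x (by simp [hx]))]
  omega

theorem card_le_qsize {s : Multiset (QP A)} (h : ∀ x ∈ s, QPrime x) :
    s.card ≤ qsize s.sum := by
  induction s using Multiset.induction_on with
  | empty => simp
  | cons a s ih =>
    have hs : ∀ x ∈ s, QPrime x := fun x hx => h x (by simp [hx])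
    have ha : QPrime a := h a (by simp)
    rw [Multiset.sum_cons, qsize_add ha.1 (qfin_sum hs)]
    have := ih hs
    have := ha.size_pos
    simp; omega

open Classical in
theorem qstep_sum {s : Multiset (QP A)} {a : A} {z : QP A} (h : QStep s.sum a z) :
    ∃ i ∈ s, ∃ r, QStep i a r ∧ z = (s.erase i).sum + r := by
  induction s using Multiset.induction_on generalizing z with
  | empty => exact (qstep_zero h).elim
  | cons j s ih =>
    rw [Multiset.sum_cons] at h
    rcases qstep_add.1 h with ⟨r, hr, rfl⟩ | ⟨w, hw, rfl⟩
    · exact ⟨j, by simp, r, hr, by simp [add_comm]⟩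
    · obtain ⟨i, hi, r, hr, rfl⟩ := ih hw
      refine ⟨i, by simp [hi], r, hr, ?_⟩
      by_cases hij : i = j
      · subst hij
        rw [Multiset.erase_cons_head, ← Multiset.cons_erase hi, Multiset.sum_cons]
        simp [add_assoc]
      · rw [Multiset.erase_cons_tail _ (fun e => hij e.symm), Multiset.sum_cons]
        abel

open Classical in
theorem qstep_sum' {s : Multiset (QP A)} {a : A} {i r : QP A} (hi : i ∈ s) (h : QStep i a r) :
    QStep s.sum a ((s.erase i).sum + r) := by
  have : s.sum = (s.erase i).sum + i := by
    conv_lhs => rw [← Multiset.cons_erase hi, Multiset.sum_cons, add_comm]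
  rw [this]; exact h.addR _

open Classical in
theorem unique_dec {s t : Multiset (QP A)} (hs : ∀ x ∈ s, QPrime x) (ht : ∀ x ∈ t, QPrime x)
    (h : s.sum = t.sum) : s = t := by
  generalize hn : qsize s.sum = n
  induction n using Nat.strong_induction_on generalizing s t with
  | _ n ih =>
  -- matching of moves
  have key : ∀ {s t : Multiset (QP A)}, (∀ x ∈ s, QPrime x) → (∀ x ∈ t, QPrime x) →
      s.sum = t.sum → qsize s.sum = n → ∀ {j a r}, j ∈ s → QStep j a r →
      ∃ i ∈ t, ∃ r', QStep i a r' ∧ s.erase j + dec r = t.erase i + dec r' := by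
    intro s t hs ht h hn j a r hj hr
    have st := qstep_sum' hj hr
    have fr := ((hs j hj).1.step hr).1
    have hsz := ((qfin_sum hs).step st).2
    rw [h] at st
    obtain ⟨i, hi, r', hr', e⟩ := qstep_sum st
    have fr' := ((ht i hi).1.step hr').1
    refine ⟨i, hi, r', hr', ?_⟩
    have e2 : (s.erase j + dec r).sum = (s.erase j).sum + r := by
      rw [Multiset.sum_add, dec_sum fr]
    refine ih _ (by rw [← hn, hsz]; exact Nat.lt_succ_self _) ?_ ?_ ?_ (congrArg qsize e2)
    · intro x hx
      rcases Multiset.mem_add.1 hx with hx | hx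
      · exact hs x (Multiset.mem_of_mem_erase hx)
      · exact dec_prime x hx
    · intro x hx
      rcases Multiset.mem_add.1 hx with hx | hx
      · exact ht x (Multiset.mem_of_mem_erase hx)
      · exact dec_prime x hx
    · rw [e2, e, Multiset.sum_add, dec_sum fr']
  have small : ∀ {j a r}, QPrime j → QStep j a r → ∀ {q : QP A}, qsize j ≤ qsize q →
      (dec r).count q = 0 := by
    intro j a r hj hr q hq
    refine Multiset.count_eq_zero.2 fun hm => ?_
    have h1 := hj.1.step hr
    have := qsize_le_sum (fun x hx => dec_prime x hx) hm
    rw [dec_sum h1.1] at this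
    omega
  -- the asymmetric core
  have core : ∀ {s t : Multiset (QP A)}, (∀ x ∈ s, QPrime x) → (∀ x ∈ t, QPrime x) →
      s.sum = t.sum → qsize s.sum = n → ∀ p, t.count p < s.count p →
      (∀ q, qsize p < qsize q → s.count q = t.count q) → False := by
    intro s t hs ht h hn p hp hbig
    have hps : p ∈ s := Multiset.count_pos.1 (by omega)
    have pp := hs p hps
    by_cases c1 : ∃ j ∈ s, j ≠ p ∧ qsize j ≤ qsize p
    · obtain ⟨j, hj, hjp, hle⟩ := c1
      obtain ⟨a, r, hr⟩ := (hs j hj).1.exists_step (hs j hj).2.1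
      obtain ⟨i, hi, r', hr', e⟩ := key hs ht h hn hj hr
      by_cases hi2 : qsize p < qsize i
      · have e2 := congrArg (Multiset.count i) e
        have hij : i ≠ j := by rintro rfl; omega
        rw [Multiset.count_add, Multiset.count_add, Multiset.count_erase_self,
          Multiset.count_erase_of_ne hij, small (hs j hj) hr (by omega),
          small (ht i hi) hr' le_rfl, hbig i hi2] at e2
        have := Multiset.count_pos.2 hi
        omega
      · have e2 := congrArg (Multiset.count p) e
        rw [Multiset.count_add, Multiset.count_add, Multiset.count_erase_of_ne hjp.symm,
          small (hs j hj) hr hle, small (ht i hi) hr' (by omega)] at e2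
        have := Multiset.count_le_of_le p (Multiset.erase_le i t)
        omega
    by_cases c2 : ∃ j ∈ s, qsize p < qsize j
    · obtain ⟨j, hj, hlt⟩ := c2
      have hjp : j ≠ p := by rintro rfl; omega
      -- choose the residual with the largest number of p
      have : ∃ m, ∃ a r, QStep j a r ∧ (dec r).count p = m ∧
          ∀ b r', QStep j b r' → (dec r').count p ≤ m := by
        have bdd : ∀ b r', QStep j b r' → (dec r').count p ≤ qsize j := by
          intro b r' hr'
          have h1 := (hs j hj).1.step hr'
          have h2 := card_le_qsize (s := dec r') fun x hx => dec_prime x hx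
          rw [dec_sum h1.1] at h2
          have := Multiset.count_le_card p (dec r')
          omega
        let P : ℕ → Prop := fun m => ∃ a r, QStep j a r ∧ (dec r).count p = m
        obtain ⟨a, r, hr⟩ := (hs j hj).1.exists_step (hs j hj).2.1
        have hP : P (Nat.findGreatest P (qsize j)) :=
          Nat.findGreatest_spec (P := P) (bdd a r hr) ⟨a, r, hr, rfl⟩
        obtain ⟨a', r'', h1, h2⟩ := hP
        exact ⟨_, a', r'', h1, h2, fun b r' hr' =>
          Nat.le_findGreatest (bdd b r' hr') ⟨b, r', hr', rfl⟩⟩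
      obtain ⟨m, a, r, hr, hm, hmax⟩ := this
      obtain ⟨i, hi, r', hr', e⟩ := key hs ht h hn hj hr
      have e2 := congrArg (Multiset.count j) e
      have hj1 := hbig j hlt
      have hjpos := Multiset.count_pos.2 hj
      rw [Multiset.count_add, Multiset.count_add, Multiset.count_erase_self,
          small (hs j hj) hr le_rfl] at e2
      by_cases hij : i = j
      · subst hij
        have e3 := congrArg (Multiset.count p) e
        rw [Multiset.count_add, Multiset.count_add, Multiset.count_erase_of_ne hjp.symm,
          Multiset.count_erase_of_ne hjp.symm, hm] at e3
        have := hmax _ _ hr'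
        omega
      · rw [Multiset.count_erase_of_ne (Ne.symm hij)] at e2
        omega
    · push Not at c1 c2
      have hall : ∀ j ∈ s, j = p := by
        intro j hj
        by_contra hjp
        have := c1 j hj hjp
        have := c2 j hj
        omega
      have hrep : s = Multiset.replicate s.card p := Multiset.eq_replicate_card.2 hall
      have hcnt : s.count p = s.card := by
        conv_lhs => rw [hrep]
        simp
      -- an element of t different from p
      have hex : ∃ i ∈ t, i ≠ p := by
        by_contra hne
        push Not at hne
        have ht2 : t = Multiset.replicate t.card p := Multiset.eq_replicate_card.2 hne
        have hcnt2 : t.count p = t.card := by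
          conv_lhs => rw [ht2]
          simp
        have hlt : t < s := by
          rw [ht2, hrep]
          exact lt_of_le_of_ne (Multiset.replicate_le_replicate p |>.2 (by omega))
            (fun e => by have := congrArg Multiset.card e; simp at this; omega)
        obtain ⟨u, hu⟩ := Multiset.le_iff_exists_add.1 hlt.le
        have hup : ∀ x ∈ u, QPrime x := fun x hx => hs x (by rw [hu]; simp [hx])
        have e1 := card_le_qsize hup
        have e2 := qsize_add (qfin_sum ht) (qfin_sum hup)
        rw [← Multiset.sum_add, ← hu, h] at e2
        have e3 := congrArg Multiset.card hu
        simp at e3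
        omega
      obtain ⟨i, hi, hip⟩ := hex
      have hile : qsize i ≤ qsize p := by
        by_contra hlt
        have h1 := hbig i (by omega)
        have h2 := Multiset.count_pos.2 hi
        exact hip (hall i (Multiset.count_pos.1 (by omega)))
      obtain ⟨a, r, hr⟩ := (ht i hi).1.exists_step (ht i hi).2.1
      obtain ⟨k, hk, r', hr', e⟩ := key ht hs h.symm (h ▸ hn) hi hr
      obtain rfl := hall k hk
      have e2 := congrArg (Multiset.count k) e
      rw [Multiset.count_add, Multiset.count_add, Multiset.count_erase_of_ne hip.symm,
          Multiset.count_erase_self, small (ht i hi) hr hile, small pp hr' le_rfl] at e2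
      by_cases hc : t.count k = 0
      · -- s = {k}
        have hs1 : s.card = 1 := by omega
        rw [hs1] at hrep
        have hsum : k = i + (t.erase i).sum := by
          rw [← Multiset.sum_cons, Multiset.cons_erase hi, ← h, hrep]; simp
        have htp : ∀ x ∈ t.erase i, QPrime x := fun x hx => ht x (Multiset.mem_of_mem_erase hx)
        rcases pp.2.2 _ _ (ht i hi).1 (qfin_sum htp) hsum with h0 | h0
        · exact (ht i hi).2.1 h0
        · rw [h0, add_zero] at hsum; exact hip hsum.symm
      · have hkt : k ∈ t := Multiset.count_pos.1 (by omega)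
        obtain ⟨i', hi', r'', hr'', e3⟩ := key ht hs h.symm (h ▸ hn) hkt hr'
        obtain rfl := hall i' hi'
        have e4 := congrArg (Multiset.count i') e3
        rw [Multiset.count_add, Multiset.count_add, Multiset.count_erase_self,
          Multiset.count_erase_self, small pp hr' le_rfl, small pp hr'' le_rfl] at e4
        omega
  by_contra hne
  -- a prime of maximal size with different counts
  have hfin : ∃ p, s.count p ≠ t.count p := by
    by_contra hc
    push Not at hc
    exact hne (Multiset.ext.2 hc)
  have : ∃ p, s.count p ≠ t.count p ∧ ∀ q, qsize p < qsize q → s.count q = t.count q := by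
    let D : Finset (QP A) := (s + t).toFinset.filter fun p => s.count p ≠ t.count p
    have hD : ∀ q, s.count q ≠ t.count q → q ∈ D := by
      intro q hq
      simp only [D, Finset.mem_filter, Multiset.mem_toFinset, Multiset.mem_add]
      refine ⟨?_, hq⟩
      by_contra hc
      push Not at hc
      rw [Multiset.count_eq_zero.2 hc.1, Multiset.count_eq_zero.2 hc.2] at hq
      exact hq rfl
    obtain ⟨p0, hp0⟩ := hfin
    obtain ⟨p, hpD, hmax⟩ := D.exists_max_image qsize ⟨p0, hD p0 hp0⟩
    refine ⟨p, (Finset.mem_filter.1 hpD).2, fun q hq => ?_⟩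
    by_contra hc
    have := hmax q (hD q hc)
    omega
  obtain ⟨p, hp, hbig⟩ := this
  rcases Nat.lt_or_gt_of_ne hp with hlt | hlt
  · exact core ht hs h.symm (h ▸ hn) p hlt fun q hq => (hbig q hq).symm
  · exact core hs ht h hn p hlt hbig

end CCS


namespace CCS
open Proc
variable {A : Type}

/-! ### Completeness of the distribution law on finite processes -/

theorem count_dec_residual [DecidableEq (QP A)] {j r : QP A} {a : A} (hj : QPrime j)
    (hr : QStep j a r) : (dec r).count j = 0 := by
  refine Multiset.count_eq_zero.2 fun hm => ?_
  have h1 := hj.1.step hr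
  have := qsize_le_sum (fun x hx => dec_prime x hx) hm
  rw [dec_sum h1.1] at this
  omega

/-- Class of a component. -/
def ccls (x : A × Proc A) : QP A := cls (pre x.1 x.2)

theorem cls_prodPre (l : List (A × Proc A)) :
    cls (prodPre l) = (l.map ccls : Multiset (QP A)).sum := by
  induction l with
  | nil => rfl
  | cons x l ih =>
    rw [List.map_cons, ← Multiset.cons_coe, Multiset.sum_cons, ← ih]; rfl

theorem eqD_prodPre_append (l l' : List (A × Proc A)) :
    EqD (par (prodPre l) (prodPre l')) (prodPre (l ++ l')) := by
  induction l with
  | nil => exact (EqD.parComm _ _).trans (.parNil _)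
  | cons x l ih => exact (EqD.parAssoc _ _ _).trans (.congPar (.refl _) ih)

theorem eqD_prodPre_perm {l l' : List (A × Proc A)} (h : l.Perm l') :
    EqD (prodPre l) (prodPre l') := by
  induction h with
  | nil => exact .refl _
  | cons x _ ih => exact .congPar (.refl _) ih
  | swap x y l =>
    exact (EqD.parAssoc _ _ _).symm.trans ((EqD.congPar (.parComm _ _) (.refl _)).trans
      (.parAssoc _ _ _))
  | trans _ _ h1 h2 => exact h1.trans h2

theorem eqD_match (l1 l2 : List (A × Proc A))
    (h1 : ∀ x ∈ l1, ∀ q : Proc A, q.IsFin → cls x.2 = cls q → EqD x.2 q)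
    (h2 : ∀ x ∈ l2, x.2.IsFin) (h : (l1.map ccls).Perm (l2.map ccls)) :
    EqD (prodPre l1) (prodPre l2) := by
  induction l1 generalizing l2 with
  | nil =>
    have : l2 = [] := by simpa using h.symm.eq_nil
    subst this; exact .refl _
  | cons x l1 ih =>
    have hm : ccls x ∈ l2.map ccls := h.subset (by simp)
    obtain ⟨y, hy, hxy⟩ := List.mem_map.1 hm
    obtain ⟨u, v, rfl⟩ := List.append_of_mem hy
    have hp : (u ++ y :: v).Perm (y :: (u ++ v)) := List.perm_middle
    have hq : (l1.map ccls).Perm ((u ++ v).map ccls) := by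
      have := h.trans (hp.map ccls)
      rw [List.map_cons, List.map_cons, hxy] at this
      exact this.cons_inv
    have e1 := ih (u ++ v) (fun z hz => h1 z (by simp [hz]))
      (fun z hz => h2 z (by simp at hz ⊢; tauto)) hq
    obtain ⟨ea, eb⟩ := cls_pre_inj hxy
    have e2 : EqD (pre x.1 x.2) (pre y.1 y.2) := by
      rw [ea]; exact .congPre _ (h1 x (by simp) _ (h2 y hy) eb.symm)
    exact (EqD.congPar e2 e1).trans (eqD_prodPre_perm hp.symm)

theorem prodPre_replicate (n : ℕ) (a : A) (p : Proc A) :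
    prodPre (List.replicate n (a, p)) = reps n (pre a p) := by
  induction n with
  | zero => rfl
  | succ n ih => rw [List.replicate_succ, reps, ← ih]; rfl

theorem isFin_reps {p : Proc A} (hp : p.IsFin) (n : ℕ) : (reps n p).IsFin := by
  induction n with
  | zero => trivial
  | succ n ih => exact ⟨hp, ih⟩

/-- Lists of prime components. -/
def GoodList (l : List (A × Proc A)) : Prop := ∀ x ∈ l, x.2.IsFin ∧ QPrime (ccls x)

open Classical in
theorem exists_form (n : ℕ)
    (comp : ∀ F G : Proc A, F.IsFin → G.IsFin → F.size < n → cls F = cls G → EqD F G)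
    (ex : ∀ F : Proc A, F.IsFin → F.size < n → ∃ l, GoodList l ∧ EqD F (prodPre l))
    (F : Proc A) (hF : F.IsFin) (hn : F.size ≤ n) : ∃ l, GoodList l ∧ EqD F (prodPre l) := by
  induction F with
  | nil => exact ⟨[], by simp [GoodList], .refl _⟩
  | repl => exact hF.elim
  | par p q ihp ihq =>
    simp only [size] at hn
    obtain ⟨l, hl, e⟩ := ihp hF.1 (by omega)
    obtain ⟨l', hl', e'⟩ := ihq hF.2 (by omega)
    refine ⟨l ++ l', ?_, (EqD.congPar e e').trans (eqD_prodPre_append _ _)⟩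
    intro x hx
    rcases List.mem_append.1 hx with hx | hx
    · exact hl x hx
    · exact hl' x hx
  | pre a P _ =>
    simp only [size] at hn
    have hP : P.IsFin := hF
    have hx : QFin (cls (pre a P)) := ⟨_, hF, rfl⟩
    by_cases hp : QPrime (cls (pre a P))
    · exact ⟨[(a, P)], by simpa [GoodList] using ⟨hP, hp⟩, (EqD.parNil _).symm⟩
    have hs := dec_sum hx
    have hpr : ∀ y ∈ dec (cls (pre a P)), QPrime y := fun y hy => dec_prime y hy
    generalize dec (cls (pre a P)) = s at hs hpr
    have hsz : qsize s.sum = P.size + 1 := by rw [hs, qsize_cls hF]; rfl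
    have form : ∀ p ∈ s, ∃ Q : Proc A, Q.IsFin ∧ p = cls (pre a Q) := by
      intro p hps
      obtain ⟨t, rfl⟩ := Multiset.exists_cons_of_mem hps
      have htp : ∀ x ∈ t, QPrime x := fun x hx => hpr x (by simp [hx])
      have ht : t ≠ 0 := by
        rintro rfl
        simp only [Multiset.sum_cons, Multiset.sum_zero, add_zero] at hs
        exact hp (hs ▸ hpr p hps)
      have hc := card_le_qsize htp
      have hc2 := Multiset.card_pos.2 ht
      rw [Multiset.sum_cons, qsize_add (hpr p hps).1 (qfin_sum htp)] at hsz
      obtain ⟨X, hX, hXp⟩ := (hpr p hps).1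
      have hXs := qsize_cls hX
      rw [hXp] at hXs
      obtain ⟨l, hl, e⟩ := ex X hX (by omega)
      have e1 := e.sound
      rw [cls_prodPre, hXp] at e1
      have e2 : ({p} : Multiset (QP A)) = (l.map ccls : Multiset (QP A)) := by
        refine unique_dec (by simpa using hpr p hps) ?_ (by simpa using e1)
        intro y hy
        obtain ⟨x, hx, rfl⟩ := List.mem_map.1 (Multiset.mem_coe.1 hy)
        exact (hl x hx).2
      have hmem : p ∈ (l.map ccls : Multiset (QP A)) := by rw [← e2]; simp
      obtain ⟨⟨b, Q⟩, hx, rfl⟩ := List.mem_map.1 (Multiset.mem_coe.1 hmem)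
      have hQf : Q.IsFin := (hl (b, Q) hx).1
      have st : QStep (ccls (b, Q)) b (cls Q) := qstep_pre.2 ⟨rfl, rfl⟩
      have st2 := qstep_sum' hps st
      rw [hs] at st2
      obtain ⟨rfl, -⟩ := qstep_pre.1 st2
      exact ⟨Q, hQf, rfl⟩
    have step : ∀ p ∈ s, ∀ Q : Proc A, Q.IsFin → p = cls (pre a Q) →
        (s.erase p + dec (cls Q)).sum = cls P ∧ (dec (cls Q)).count p = 0 ∧
        ∀ y ∈ s.erase p + dec (cls Q), QPrime y := by
      rintro p hps Q hQ rfl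
      have st : QStep (cls (pre a Q)) a (cls Q) := qstep_pre.2 ⟨rfl, rfl⟩
      have st2 := qstep_sum' hps st
      rw [hs] at st2
      obtain ⟨-, e⟩ := qstep_pre.1 st2
      refine ⟨by rw [Multiset.sum_add, dec_sum ⟨Q, hQ, rfl⟩, e],
        count_dec_residual (hpr _ hps) st, ?_⟩
      intro x hx
      rcases Multiset.mem_add.1 hx with hx | hx
      · exact hpr x (Multiset.mem_of_mem_erase hx)
      · exact dec_prime x hx
    have hne : s ≠ 0 := by
      rintro rfl
      rw [Multiset.sum_zero, qsize_zero] at hsz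
      omega
    obtain ⟨p, hps⟩ := Multiset.exists_mem_of_ne_zero hne
    obtain ⟨Q, hQ, hpQ⟩ := form p hps
    obtain ⟨s1, s2, s3⟩ := step p hps Q hQ hpQ
    have hall : ∀ q ∈ s, q = p := by
      intro q hq
      by_contra hqp
      obtain ⟨Q', hQ', hqQ⟩ := form q hq
      obtain ⟨t1, t2, t3⟩ := step q hq Q' hQ' hqQ
      have e := congrArg (Multiset.count p) (unique_dec s3 t3 (s1.trans t1.symm))
      rw [Multiset.count_add, Multiset.count_add, Multiset.count_erase_self, s2,
        Multiset.count_erase_of_ne (Ne.symm hqp)] at e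
      have := Multiset.count_pos.2 hps
      omega
    have hrep : s = Multiset.replicate s.card p := Multiset.eq_replicate_card.2 hall
    obtain ⟨m, hm⟩ : ∃ m, s.card = m + 1 :=
      ⟨s.card - 1, by have := Multiset.card_pos.2 hne; omega⟩
    rw [hm] at hrep
    have hsum : cls (pre a P) = (m + 1) • cls (pre a Q) := by
      rw [← hs, hrep, Multiset.sum_replicate, hpQ]
    rw [← cls_distr] at hsum
    have hEq : EqD P (par Q (reps m (pre a Q))) :=
      comp _ _ hP ⟨hQ, isFin_reps (p := pre a Q) hQ m⟩ (by omega) (cls_pre_inj hsum).2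
    refine ⟨List.replicate (m + 1) (a, Q), ?_, ?_⟩
    · intro x hx
      obtain rfl := List.eq_of_mem_replicate hx
      exact ⟨hQ, by have := hpr p hps; rwa [hpQ] at this⟩
    · rw [prodPre_replicate]
      exact (EqD.congPre a hEq).trans (.distr a Q m hQ)

theorem complete_aux (n : ℕ) :
    (∀ F G : Proc A, F.IsFin → G.IsFin → F.size < n → cls F = cls G → EqD F G) ∧
    (∀ F : Proc A, F.IsFin → F.size < n → ∃ l, GoodList l ∧ EqD F (prodPre l)) := by
  induction n with
  | zero => exact ⟨fun _ _ _ _ h => by omega, fun _ _ h => by omega⟩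
  | succ n ih =>
    have ex := exists_form n ih.1 ih.2
    refine ⟨fun F G hF hG hn h => ?_, fun F hF hn => ex F hF (by omega)⟩
    have hsz := size_eq hF hG h
    obtain ⟨l, hl, e⟩ := ex F hF (by omega)
    obtain ⟨l', hl', e'⟩ := ex G hG (by omega)
    have pr : ∀ l : List (A × Proc A), GoodList l →
        ∀ y ∈ (l.map ccls : Multiset (QP A)), QPrime y := by
      intro l hl y hy
      obtain ⟨x, hx, rfl⟩ := List.mem_map.1 (Multiset.mem_coe.1 hy)
      exact (hl x hx).2
    have e1 := e.sound
    have e2 := e'.sound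
    rw [cls_prodPre] at e1 e2
    have hu := unique_dec (pr l hl) (pr l' hl') (by rw [← e1, ← e2, h])
    refine e.trans ((eqD_match l l' ?_ (fun x hx => (hl' x hx).1)
      (Multiset.coe_eq_coe.1 hu)).trans e'.symm)
    intro x hx q hq hxq
    refine ih.1 _ _ (hl x hx).1 hq ?_ hxq
    have := qsize_le_sum (pr l hl) (y := ccls x)
      (Multiset.mem_coe.2 (List.mem_map.2 ⟨x, hx, rfl⟩))
    rw [← e1, qsize_cls hF, ccls, qsize_cls (p := pre x.1 x.2) (hl x hx).1] at this
    simp only [size] at this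
    omega

theorem complete {F G : Proc A} (hF : F.IsFin) (hG : G.IsFin) (h : cls F = cls G) : EqD F G :=
  (complete_aux (F.size + 1)).1 F G hF hG (by omega) h

end CCS


namespace CCS
open Proc
variable {A : Type}

/-! ### Replicated processes -/

theorem ReplOnly.fin {S : Proc A} (hS : ReplOnly S) {a : A} {G : Proc A} (h : TopRepl S a G) :
    G.IsFin := by
  induction h with
  | repl => exact hS
  | parL _ _ ih => exact ih hS.1
  | parR _ _ ih => exact ih hS.2

theorem ReplOnly.wf {S : Proc A} (hS : ReplOnly S) : S.Wf := by
  induction S with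
  | nil => trivial
  | pre => exact hS.elim
  | par p q h1 h2 => exact ⟨h1 hS.1, h2 hS.2⟩
  | repl a p => exact hS

theorem qstep_topRepl {S : Proc A} (hS : ReplOnly S) {a : A} {z : QP A} :
    QStep (cls S) a z ↔ ∃ G, TopRepl S a G ∧ z = cls S + cls G := by
  induction S generalizing z with
  | nil =>
    constructor
    · intro h; exact (qstep_zero h).elim
    · rintro ⟨G, h, -⟩; cases h
  | pre => exact hS.elim
  | repl b p =>
    rw [qstep_repl]
    constructor
    · rintro ⟨rfl, rfl⟩; exact ⟨p, .repl _ _, rfl⟩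
    · rintro ⟨G, h, rfl⟩; cases h; exact ⟨rfl, rfl⟩
  | par p q h1 h2 =>
    rw [cls_par, qstep_add]
    constructor
    · rintro (⟨x, h, rfl⟩ | ⟨x, h, rfl⟩)
      · obtain ⟨G, hG, rfl⟩ := (h1 hS.1).1 h
        exact ⟨G, .parL _ hG, by abel⟩
      · obtain ⟨G, hG, rfl⟩ := (h2 hS.2).1 h
        exact ⟨G, .parR _ hG, by abel⟩
    · rintro ⟨G, h, rfl⟩
      cases h with
      | parL _ h => exact .inl ⟨_, (h1 hS.1).2 ⟨G, h, rfl⟩, by abel⟩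
      | parR _ h => exact .inr ⟨_, (h2 hS.2).2 ⟨G, h, rfl⟩, by abel⟩

/-- Transitions of `S | x`. -/
theorem qstep_S {S : Proc A} (hS : ReplOnly S) {a : A} {x z : QP A} :
    QStep (cls S + x) a z ↔ (∃ G, TopRepl S a G ∧ z = cls S + (cls G + x)) ∨
      (∃ x', QStep x a x' ∧ z = cls S + x') := by
  rw [qstep_add]
  constructor
  · rintro (⟨y, h, rfl⟩ | h)
    · obtain ⟨G, hG, rfl⟩ := (qstep_topRepl hS).1 h
      exact .inl ⟨G, hG, by abel⟩
    · exact .inr h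
  · rintro (⟨G, h, rfl⟩ | h)
    · exact .inl ⟨_, (qstep_topRepl hS).2 ⟨G, h, rfl⟩, by abel⟩
    · exact .inr h

theorem sandwich {S : Proc A} (hS : ReplOnly S) {z w : QP A} (h : cls S + (z + w) = cls S) :
    cls S + z = cls S := by
  have ab : ∀ u, cls S + u + (z + w) = cls S + u := by
    intro u
    calc cls S + u + (z + w) = (cls S + (z + w)) + u := by abel
      _ = _ := by rw [h]
  refine (qcoind (fun P Q => (∃ u, P = cls S + u) ∧ Q = P + z ∧ P = Q + w) ?_ ?_
    ⟨⟨0, by simp⟩, rfl, by rw [add_assoc, h]⟩).symm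
  · rintro P Q ⟨⟨u, rfl⟩, rfl, -⟩ a P' hs
    have : ∃ u', P' = cls S + u' := by
      rcases (qstep_S hS).1 hs with ⟨G, -, rfl⟩ | ⟨x', -, rfl⟩ <;> exact ⟨_, rfl⟩
    obtain ⟨u', rfl⟩ := this
    exact ⟨_, hs.addL z, ⟨u', rfl⟩, rfl, by rw [add_assoc, ab]⟩
  · rintro P Q ⟨⟨u, hu⟩, hQ, hP⟩ a Q' hs
    have hs0 := hs
    rw [hQ, hu, add_assoc] at hs
    have : ∃ u', Q' = cls S + u' := by
      rcases (qstep_S hS).1 hs with ⟨G, -, rfl⟩ | ⟨x', -, rfl⟩ <;> exact ⟨_, rfl⟩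
    obtain ⟨u', rfl⟩ := this
    refine ⟨_, hP ▸ hs0.addL w, ⟨u' + w, by abel⟩, ?_, rfl⟩
    rw [add_assoc, add_comm w z, ab]

theorem absorb {S : Proc A} (hS : ReplOnly S) {a : A} {G : Proc A} (h : TopRepl S a G) :
    cls S + cls (pre a G) = cls S := by
  refine qcoind (fun u v => u = v ∨ ∃ w, u = cls S + (w + cls (pre a G)) ∧ v = cls S + w) ?_ ?_
    (.inr ⟨0, by simp, by simp⟩)
  · rintro u v (rfl | ⟨w, rfl, rfl⟩) b z hz
    · exact ⟨z, hz, .inl rfl⟩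
    rcases (qstep_S hS).1 hz with ⟨H, hH, rfl⟩ | ⟨x', hx, rfl⟩
    · exact ⟨_, (qstep_S hS).2 (.inl ⟨H, hH, rfl⟩), .inr ⟨cls H + w, by abel, rfl⟩⟩
    · rcases qstep_add.1 hx with ⟨w', hw, rfl⟩ | ⟨y, hy, rfl⟩
      · exact ⟨_, hw.addR _, .inr ⟨w', rfl, rfl⟩⟩
      · obtain ⟨rfl, rfl⟩ := qstep_pre.1 hy
        exact ⟨_, (qstep_S hS).2 (.inl ⟨G, h, rfl⟩), .inl (by abel)⟩
  · rintro u v (rfl | ⟨w, rfl, rfl⟩) b z hz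
    · exact ⟨z, hz, .inl rfl⟩
    rcases (qstep_S hS).1 hz with ⟨H, hH, rfl⟩ | ⟨x', hx, rfl⟩
    · exact ⟨_, (qstep_S hS).2 (.inl ⟨H, hH, rfl⟩), .inr ⟨cls H + w, by abel, rfl⟩⟩
    · exact ⟨_, (hx.addL _).addR _, .inr ⟨x', rfl, rfl⟩⟩

theorem approx_pre {S : Proc A} (hS : ReplOnly S) {a : A} {p q : Proc A}
    (h : cls S + cls p = cls S + cls q) :
    cls S + cls (pre a p) = cls S + cls (pre a q) := by
  have main : ∀ {p q : Proc A}, cls S + cls p = cls S + cls q →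
      ∀ u v, (u = v ∨ ∃ w, u = cls S + (w + cls (pre a p)) ∧ v = cls S + (w + cls (pre a q))) →
      ∀ b z, QStep u b z → ∃ z', QStep v b z' ∧
        (z = z' ∨ ∃ w, z = cls S + (w + cls (pre a p)) ∧ z' = cls S + (w + cls (pre a q))) := by
    rintro p q h u v (rfl | ⟨w, rfl, rfl⟩) b z hz
    · exact ⟨z, hz, .inl rfl⟩
    rcases (qstep_S hS).1 hz with ⟨H, hH, rfl⟩ | ⟨x', hx, rfl⟩
    · exact ⟨_, (qstep_S hS).2 (.inl ⟨H, hH, rfl⟩), .inr ⟨cls H + w, by abel, by abel⟩⟩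
    · rcases qstep_add.1 hx with ⟨w', hw, rfl⟩ | ⟨y, hy, rfl⟩
      · exact ⟨_, (hw.addL _).addR _, .inr ⟨w', rfl, rfl⟩⟩
      · obtain ⟨rfl, rfl⟩ := qstep_pre.1 hy
        refine ⟨_, ((qstep_pre.2 ⟨rfl, rfl⟩ : QStep (cls (pre b q)) b _).addR _).addR _,
          .inl ?_⟩
        calc cls S + (w + cls p) = (cls S + cls p) + w := by abel
          _ = _ := by rw [h]; abel
  refine qcoind (fun u v => u = v ∨ ∃ w, u = cls S + (w + cls (pre a p)) ∧
    v = cls S + (w + cls (pre a q))) (main h) ?_ (.inr ⟨0, by simp, by simp⟩)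
  intro u v huv b z hz
  obtain ⟨z', h1, h2⟩ := main h.symm v u (by
    rcases huv with rfl | ⟨w, h1, h2⟩
    · exact .inl rfl
    · exact .inr ⟨w, h2, h1⟩) b z hz
  refine ⟨z', h1, ?_⟩
  rcases h2 with rfl | ⟨w, h1, h2⟩
  · exact .inl rfl
  · exact .inr ⟨w, h2, h1⟩

/-- Replacing components of `S` by equivalent ones. -/
theorem replace_repl {S T : Proc A} (hS : ReplOnly S) (hT : ReplOnly T)
    (h1 : ∀ a G, TopRepl S a G → ∃ H, TopRepl T a H ∧ cls S + cls G = cls S + cls H)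
    (h2 : ∀ a H, TopRepl T a H → ∃ G, TopRepl S a G ∧ cls S + cls G = cls S + cls H) :
    cls S = cls T := by
  refine qcoind (fun u v => ∃ x, u = cls S + x ∧ v = cls T + x) ?_ ?_ ⟨0, by simp, by simp⟩
  · rintro _ _ ⟨x, rfl, rfl⟩ a z hz
    rcases (qstep_S hS).1 hz with ⟨G, hG, rfl⟩ | ⟨x', hx, rfl⟩
    · obtain ⟨H, hH, e⟩ := h1 a G hG
      exact ⟨_, (qstep_S hT).2 (.inl ⟨H, hH, rfl⟩), cls H + x,
        by rw [← add_assoc, e, add_assoc], rfl⟩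
    · exact ⟨_, hx.addR _, x', rfl, rfl⟩
  · rintro _ _ ⟨x, rfl, rfl⟩ a z hz
    rcases (qstep_S hT).1 hz with ⟨H, hH, rfl⟩ | ⟨x', hx, rfl⟩
    · obtain ⟨G, hG, e⟩ := h2 a H hH
      exact ⟨_, (qstep_S hS).2 (.inl ⟨G, hG, rfl⟩), cls H + x,
        by rw [← add_assoc, e, add_assoc], rfl⟩
    · exact ⟨_, hx.addR _, x', rfl, rfl⟩

theorem exists_replace {S : Proc A} (hS : ReplOnly S) {b : A} {G : Proc A} (h : TopRepl S b G)
    {G' : Proc A} (hG' : G'.IsFin) (hlt : G'.size < G.size) :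
    ∃ T, ReplOnly T ∧ T.size < S.size ∧ TopRepl T b G' ∧
      (∀ a H, TopRepl T a H → TopRepl S a H ∨ (a = b ∧ H = G')) ∧
      (∀ a H, TopRepl S a H → TopRepl T a H ∨ (a = b ∧ H = G)) := by
  induction h with
  | repl b G =>
    refine ⟨repl b G', hG', by simp only [size]; omega, .repl _ _, ?_, ?_⟩
    · intro a H h; cases h; exact .inr ⟨rfl, rfl⟩
    · intro a H h; cases h; exact .inr ⟨rfl, rfl⟩
  | parL q h ih =>
    obtain ⟨T, t1, t2, t3, t4, t5⟩ := ih hS.1 hlt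
    refine ⟨par T q, ⟨t1, hS.2⟩, by simp only [size]; omega, .parL _ t3, ?_, ?_⟩
    · intro a H h
      cases h with
      | parL _ h => exact (t4 a H h).imp (.parL _) id
      | parR _ h => exact .inl (.parR _ h)
    · intro a H h
      cases h with
      | parL _ h => exact (t5 a H h).imp (.parL _) id
      | parR _ h => exact .inl (.parR _ h)
  | parR q h ih =>
    obtain ⟨T, t1, t2, t3, t4, t5⟩ := ih hS.2 hlt
    refine ⟨par q T, ⟨hS.1, t1⟩, by simp only [size]; omega, .parR _ t3, ?_, ?_⟩
    · intro a H h
      cases h with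
      | parR _ h => exact (t4 a H h).imp (.parR _) id
      | parL _ h => exact .inl (.parL _ h)
    · intro a H h
      cases h with
      | parR _ h => exact (t5 a H h).imp (.parR _) id
      | parL _ h => exact .inl (.parL _ h)

/-- Components of a seed have minimal size in their class. -/
theorem seed_min {S : Proc A} (hS : ReplOnly S) (hseed : IsSeed S) {b : A} {G : Proc A}
    (h : TopRepl S b G) {G' : Proc A} (hG' : G'.IsFin)
    (e : cls S + cls G = cls S + cls G') : G.size ≤ G'.size := by
  by_contra hlt
  obtain ⟨T, t1, t2, t3, t4, t5⟩ := exists_replace hS h hG' (by omega)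
  have : cls S = cls T := by
    refine replace_repl hS t1 ?_ ?_
    · intro a H hH
      rcases t5 a H hH with h | ⟨rfl, rfl⟩
      · exact ⟨H, h, rfl⟩
      · exact ⟨G', t3, e⟩
    · intro a H hH
      rcases t4 a H hH with h | ⟨rfl, rfl⟩
      · exact ⟨H, h, rfl⟩
      · exact ⟨G, h, e⟩
  have := hseed.2 T t1.wf (cls_eq.1 this.symm)
  omega

/-! ### Subterms -/

/-- Subterms. -/
inductive Sub : Proc A → Proc A → Prop where
  | refl (p : Proc A) : Sub p p
  | pre (a : A) {q p : Proc A} : Sub q p → Sub q (Proc.pre a p)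
  | parL (r : Proc A) {q p : Proc A} : Sub q p → Sub q (Proc.par p r)
  | parR (r : Proc A) {q p : Proc A} : Sub q p → Sub q (Proc.par r p)

theorem Sub.trans {p q r : Proc A} (h : Sub p q) (h' : Sub q r) : Sub p r := by
  induction h' with
  | refl => exact h
  | pre a _ ih => exact .pre a (ih h)
  | parL a _ ih => exact .parL a (ih h)
  | parR a _ ih => exact .parR a (ih h)

theorem Sub.fin {p q : Proc A} (h : Sub p q) (hq : q.IsFin) : p.IsFin := by
  induction h with
  | refl => exact hq
  | pre a _ ih => exact ih hq
  | parL a _ ih => exact ih hq.1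
  | parR a _ ih => exact ih hq.2

theorem Sub.shrink {S : Proc A} (hS : ReplOnly S) {q G : Proc A} (h : Sub q G) (hG : G.IsFin)
    (hq : cls S + cls q = cls S) (hpos : 0 < q.size) :
    ∃ G' : Proc A, G'.IsFin ∧ G'.size < G.size ∧ cls S + cls G = cls S + cls G' := by
  induction h with
  | refl => exact ⟨nil, trivial, hpos, by rw [hq, cls_nil, add_zero]⟩
  | pre a _ ih =>
    obtain ⟨G', g1, g2, g3⟩ := ih hG hq hpos
    exact ⟨.pre a G', g1, by simp only [size]; omega, approx_pre hS g3⟩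
  | parL r _ ih =>
    obtain ⟨G', g1, g2, g3⟩ := ih hG.1 hq hpos
    exact ⟨.par G' r, ⟨g1, hG.2⟩, by simp only [size]; omega, by
      rw [cls_par, cls_par, ← add_assoc, g3, add_assoc]⟩
  | parR r _ ih =>
    obtain ⟨G', g1, g2, g3⟩ := ih hG.2 hq hpos
    exact ⟨.par r G', ⟨hG.1, g1⟩, by simp only [size]; omega, by
      rw [cls_par, cls_par, add_comm (cls r), add_comm (cls r), ← add_assoc, g3, add_assoc]⟩

/-- All components come from subterms of the components of `S`. -/
def Ok (S : Proc A) : Proc A → Prop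
  | .nil => True
  | .pre a p => ∃ b G, TopRepl S b G ∧ Sub (.pre a p) G
  | .par p q => Ok S p ∧ Ok S q
  | .repl a p => TopRepl S a p

theorem Sub.ok {S : Proc A} (hS : ReplOnly S) {b : A} {G p : Proc A} (h : TopRepl S b G)
    (hs : Sub p G) : Ok S p := by
  induction p with
  | nil => trivial
  | pre a p => exact ⟨b, G, h, hs⟩
  | par p q h1 h2 =>
    exact ⟨h1 (Sub.trans (.parL _ (.refl _)) hs), h2 (Sub.trans (.parR _ (.refl _)) hs)⟩
  | repl a p => exact (hs.fin (hS.fin h)).elim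

theorem Ok.step {S : Proc A} (hS : ReplOnly S) {p p' : Proc A} {a : A} (hp : Ok S p)
    (h : Step p a p') : Ok S p' := by
  induction h with
  | pre =>
    obtain ⟨b, G, h, hs⟩ := hp
    exact Sub.ok hS h (Sub.trans (.pre _ (.refl _)) hs)
  | repl => exact ⟨hp, Sub.ok hS hp (.refl _)⟩
  | parL _ _ ih => exact ⟨ih hp.1, hp.2⟩
  | parR _ _ ih => exact ⟨hp.1, ih hp.2⟩

theorem Ok.nsteps {S : Proc A} (hS : ReplOnly S) {p p' : Proc A} {k : ℕ} (hp : Ok S p)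
    (h : NSteps p k p') : Ok S p' := by
  induction h with
  | zero => exact hp
  | succ h _ ih => exact ih (hp.step hS h)

theorem ok_self {S T : Proc A} (hS : ReplOnly S) (h : ∀ a G, TopRepl S a G → TopRepl T a G) :
    Ok T S := by
  induction S with
  | nil => trivial
  | pre => exact hS.elim
  | repl a p => exact h a p (.repl _ _)
  | par p q h1 h2 =>
    exact ⟨h1 hS.1 fun a G hG => h a G (.parL _ hG), h2 hS.2 fun a G hG => h a G (.parR _ hG)⟩

/-- The non-replicated part. -/
def finPart : Proc A → Proc A
  | .nil => .nil
  | .pre a p => .pre a p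
  | .par p q => .par (finPart p) (finPart q)
  | .repl _ _ => .nil

theorem finPart_reps (n : ℕ) (a : A) (p : Proc A) :
    finPart (reps n (pre a p)) = reps n (pre a p) := by
  induction n with
  | zero => rfl
  | succ n ih => simp only [reps, finPart, ih]

theorem EqD.finPart {p q : Proc A} (h : EqD p q) : EqD (finPart p) (finPart q) := by
  induction h with
  | refl => exact .refl _
  | symm _ ih => exact ih.symm
  | trans _ _ h1 h2 => exact h1.trans h2
  | parComm p q => exact .parComm _ _
  | parAssoc => exact .parAssoc _ _ _
  | parNil => exact .parNil _
  | distr a F n hF => rw [finPart_reps]; exact .distr a F n hF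
  | congPre a h _ => exact .congPre a h
  | congPar _ _ h1 h2 => exact .congPar h1 h2
  | congRepl a _ ih => exact .refl _

theorem finPart_fin {p : Proc A} (hp : p.IsFin) : finPart p = p := by
  induction p with
  | nil => rfl
  | pre => rfl
  | repl => exact hp.elim
  | par p q h1 h2 => simp only [finPart, h1 hp.1, h2 hp.2]

theorem finPart_repl {S : Proc A} (hS : ReplOnly S) : cls (finPart S) = 0 := by
  induction S with
  | nil => rfl
  | pre => exact hS.elim
  | repl => rfl
  | par p q h1 h2 => simp only [finPart, cls_par, h1 hS.1, h2 hS.2, add_zero]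

theorem Ok.finPart {S : Proc A} (hS : ReplOnly S) {p : Proc A} (hp : Ok S p) :
    Ok S (finPart p) ∧ (CCS.finPart p).IsFin := by
  induction p with
  | nil => exact ⟨trivial, trivial⟩
  | pre a p =>
    obtain ⟨b, G, h, hs⟩ := hp
    exact ⟨⟨b, G, h, hs⟩, hs.fin (hS.fin h)⟩
  | repl => exact ⟨trivial, trivial⟩
  | par p q h1 h2 => exact ⟨⟨(h1 hp.1).1, (h2 hp.2).1⟩, (h1 hp.1).2, (h2 hp.2).2⟩

theorem exists_comp (S : Proc A) {F : Proc A} (hF : F.IsFin) (h : F.size ≠ 0) :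
    ∃ b G W, G.IsFin ∧ W.IsFin ∧ cls F = cls (pre b G) + cls W ∧ (Ok S F → Ok S (pre b G)) := by
  induction F with
  | nil => exact absurd rfl h
  | pre a p => exact ⟨a, p, nil, hF, trivial, by rw [cls_nil, add_zero], id⟩
  | repl => exact hF.elim
  | par p q h1 h2 =>
    by_cases hp : p.size = 0
    · obtain ⟨b, G, W, g1, g2, g3, g4⟩ := h2 hF.2 (by simpa [size, hp] using h)
      exact ⟨b, G, par p W, g1, ⟨hF.1, g2⟩, by rw [cls_par, cls_par, g3]; abel, fun h => g4 h.2⟩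
    · obtain ⟨b, G, W, g1, g2, g3, g4⟩ := h1 hF.1 hp
      exact ⟨b, G, par W q, g1, ⟨g2, hF.2⟩, by rw [cls_par, cls_par, g3]; abel, fun h => g4 h.1⟩

theorem ok_zero {S : Proc A} (hS : ReplOnly S) (hseed : IsSeed S) {R : Proc A} (hR : R.IsFin)
    (hok : Ok S R) (h : cls S + cls R = cls S) : R.size = 0 := by
  by_contra hne
  obtain ⟨b, G, W, g1, g2, g3, g4⟩ := exists_comp S hR hne
  rw [g3] at h
  have hz := sandwich hS h
  obtain ⟨c, H, hH, hs⟩ := g4 hok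
  obtain ⟨H', k1, k2, k3⟩ := hs.shrink hS (hS.fin hH) hz (by simp [size])
  have := seed_min hS hseed hH k1 k3
  omega

/-! ### Reachability and the main theorem -/

/-- Reachability between classes. -/
def QReach : QP A → QP A → Prop := Relation.ReflTransGen fun x y => ∃ a, QStep x a y

theorem qreach_comp {x w : QP A} (hw : QFin w) : QReach (x + w) x := by
  generalize hn : qsize w = n
  induction n generalizing w with
  | zero => rw [hw.eq_zero hn, add_zero]; exact .refl
  | succ n ih =>
    obtain ⟨a, y, hs⟩ := hw.exists_step (by rintro rfl; rw [qsize_zero] at hn; omega)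
    have h1 := hw.step hs
    exact .head ⟨a, hs.addR x⟩ (ih h1.1 (by omega))

/-- Semantic version of `Dis`. -/
def QDis (S : Proc A) (x : QP A) : Prop :=
  ∀ a G, TopRepl S a G → ∀ y, QReach x y → y ≠ cls (pre a G)

theorem QDis.reach {S : Proc A} {x y : QP A} (h : QDis S x) (hr : QReach x y) : QDis S y :=
  fun a G hG z hz => h a G hG z (hr.trans hz)

theorem Dis.qdis {S F : Proc A} (hS : ReplOnly S) (hF : F.IsFin) (h : Dis S F) :
    QDis S (cls F) := by
  have main : ∀ y z : QP A, QReach y z → ∀ p : Proc A, p.IsFin → cls p = y →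
      ∃ k p', NSteps p k p' ∧ p'.IsFin ∧ cls p' = z := by
    intro y z hyz
    induction hyz using Relation.ReflTransGen.head_induction_on with
    | refl => intro p hp e; exact ⟨0, p, .zero p, hp, e⟩
    | head h1 _ ih =>
      rintro p hp rfl
      obtain ⟨a, h1⟩ := h1
      obtain ⟨p1, hs, rfl⟩ := qstep_cls.1 h1
      obtain ⟨k, p', h2, h3, h4⟩ := ih p1 (IsFin.step hp hs).1 rfl
      exact ⟨k + 1, p', .succ hs h2, h3, h4⟩
  intro a G hG y hy e
  obtain ⟨k, p', h1, h2, h3⟩ := main _ _ hy F hF rfl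
  exact h a G hG k ⟨p', h1, complete h2 (G := pre a G) (show G.IsFin from hS.fin hG) (h3.trans e)⟩

theorem ok_reach {S : Proc A} (hS : ReplOnly S) {x y : QP A} (hr : QReach x y) {R : Proc A}
    (hR : R.IsFin) (hok : Ok S R) (hx : cls R = x) :
    ∃ p : Proc A, p.IsFin ∧ Ok S p ∧ cls p = y := by
  induction hr with
  | refl => exact ⟨R, hR, hok, hx⟩
  | tail _ h2 ih =>
    obtain ⟨p, hp, ho, rfl⟩ := ih
    obtain ⟨a, h2⟩ := h2
    obtain ⟨p', hs, rfl⟩ := qstep_cls.1 h2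
    exact ⟨p', (IsFin.step hp hs).1, ho.step hS hs, rfl⟩

theorem ok_qdis {S : Proc A} (hS : ReplOnly S) (hseed : IsSeed S) {R : Proc A} (hR : R.IsFin)
    (hok : Ok S R) : QDis S (cls R) := by
  intro a G hG y hy e
  obtain ⟨p, hp, ho, he⟩ := ok_reach hS hy hR hok rfl
  have e' : cls p = cls (pre a G) := he.trans e
  have h0 := ok_zero hS hseed hp ho (by rw [e']; exact absorb hS hG)
  have := size_eq hp (q := pre a G) (show G.IsFin from hS.fin hG) e'
  simp only [size] at this
  omega

theorem main_thm {S : Proc A} (hS : ReplOnly S) (hseed : IsSeed S) (n : ℕ) :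
    ∀ x : QP A, QFin x → qsize x = n → QDis S x → ∀ R : Proc A, R.IsFin → Ok S R →
      cls S + x = cls S + cls R → x = cls R := by
  induction n using Nat.strong_induction_on with
  | _ n ih =>
  intro x hx hn hdis R hR hok h
  -- moves of the left process
  have left : ∀ a x', QStep x a x' →
      (∃ R', Step R a R' ∧ x' = cls R') ∨ (∃ G, TopRepl S a G ∧ x' = cls G + cls R) := by
    intro a x' hs
    have hsz := hx.step hs
    have hd : QDis S x' := hdis.reach (.single ⟨a, hs⟩)
    have st : QStep (cls S + cls R) a (cls S + x') := h ▸ hs.addR (cls S)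
    rcases (qstep_S hS).1 st with ⟨G, hG, e⟩ | ⟨y, hy, e⟩
    · refine .inr ⟨G, hG, ?_⟩
      exact ih _ (by omega) x' hsz.1 rfl hd (par G R) ⟨hS.fin hG, hR⟩
        ⟨Sub.ok hS hG (.refl _), hok⟩ e
    · obtain ⟨R', hs', rfl⟩ := qstep_cls.1 hy
      exact .inl ⟨R', hs', ih _ (by omega) x' hsz.1 rfl hd R' (IsFin.step hR hs').1
        (hok.step hS hs') e⟩
  have right : ∀ a R', Step R a R' → R'.size < n → QStep x a (cls R') := by
    intro a R' hs hlt
    have hR' := IsFin.step hR hs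
    have hok' := hok.step hS hs
    have st : QStep (cls S + x) a (cls S + cls R') :=
      h ▸ (qstep_cls.2 ⟨R', hs, rfl⟩ : QStep (cls R) a (cls R')).addR (cls S)
    rcases (qstep_S hS).1 st with ⟨G, hG, e⟩ | ⟨y, hy, e⟩
    · have e2 : cls S + cls R' = cls S + cls (par G R) := by
        rw [e, cls_par, add_left_comm, h, add_left_comm]
      have e3 := ih _ hlt (cls R') ⟨R', hR'.1, rfl⟩ (qsize_cls hR'.1)
        (ok_qdis hS hseed hR'.1 hok') (par G R) ⟨hS.fin hG, hR⟩
        ⟨Sub.ok hS hG (.refl _), hok⟩ e2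
      have := size_eq hR'.1 (q := par G R) ⟨hS.fin hG, hR⟩ e3
      simp only [size] at this
      omega
    · have hsz := hx.step hy
      have := ih _ (by omega) y hsz.1 rfl (hdis.reach (.single ⟨a, hy⟩)) R' hR'.1 hok' e.symm
      rwa [← this]
  rcases lt_trichotomy R.size n with hlt | heq | hgt
  · -- `R` is smaller: it has no move, and `x` is absorbed by `S`
    have h0 : R.size = 0 := by
      by_contra hne
      obtain ⟨a, R', hs⟩ := exists_step hne
      have hR' := IsFin.step hR hs
      have h1 := hx.step (right a R' hs (by omega))
      rw [qsize_cls hR'.1] at h1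
      omega
    have hR0 : cls R = 0 := QFin.eq_zero ⟨R, hR, rfl⟩ (by rw [qsize_cls hR, h0])
    rw [hR0, add_zero] at h
    obtain ⟨F, hF, rfl⟩ := hx
    have hFn := qsize_cls hF
    obtain ⟨b, G, W, g1, g2, g3, -⟩ := exists_comp S hF (by omega)
    have hr : QReach (cls F) (cls (pre b G)) := by
      rw [g3]; exact qreach_comp ⟨W, g2, rfl⟩
    have hz : cls S + cls (pre b G) = cls S := by
      rw [g3] at h; exact sandwich hS h
    have hsz : qsize (cls F) = (G.size + 1) + W.size := by
      rw [g3, qsize_add ⟨pre b G, g1, rfl⟩ ⟨W, g2, rfl⟩, qsize_cls g2,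
        qsize_cls (p := pre b G) g1]
      rfl
    have sp : QStep (cls (pre b G)) b (cls G) := qstep_pre.2 ⟨rfl, rfl⟩
    have st := sp.addR (cls S)
    rw [hz] at st
    obtain ⟨H, hH, e⟩ := (qstep_topRepl hS).1 st
    have e2 := ih G.size (by omega) (cls G) ⟨G, g1, rfl⟩ (qsize_cls g1)
      ((hdis.reach hr).reach (.single ⟨b, sp⟩)) H (hS.fin hH) (Sub.ok hS hH (.refl _)) e
    exact (hdis b H hH _ hr (cls_pre_congr e2)).elim
  · apply qext
    intro a z
    constructor
    · intro hs
      have hsz := hx.step hs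
      rcases left a z hs with ⟨R', hs', rfl⟩ | ⟨G, hG, rfl⟩
      · exact qstep_cls.2 ⟨R', hs', rfl⟩
      · rw [qsize_add ⟨G, hS.fin hG, rfl⟩ ⟨R, hR, rfl⟩, qsize_cls hR] at hsz
        omega
    · intro hs
      obtain ⟨R', hs', rfl⟩ := qstep_cls.1 hs
      have := IsFin.step hR hs'
      exact right a R' hs' (by omega)
  · -- `R` is larger: `x` has no move, and `R` is absorbed by `S`
    have hx0 : x = 0 := by
      by_contra hne
      obtain ⟨a, z, hs⟩ := hx.exists_step hne
      have hsz := hx.step hs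
      rcases left a z hs with ⟨R', hs', rfl⟩ | ⟨G, hG, rfl⟩
      · have hR' := IsFin.step hR hs'
        rw [qsize_cls hR'.1] at hsz
        omega
      · rw [qsize_add ⟨G, hS.fin hG, rfl⟩ ⟨R, hR, rfl⟩, qsize_cls hR] at hsz
        omega
    rw [hx0, add_zero] at h
    have := ok_zero hS hseed hR hok h.symm
    omega

theorem cancel_aux {A : Type}
    (S F R : CCS.Proc A) (hS : CCS.ReplOnly S) (hseed : CCS.IsSeed S)
    (hF : F.IsFin) (hR : R.IsFin)
    (h : CCS.Bisim (CCS.Proc.par S F) (CCS.Proc.par S R))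
    (hdis : CCS.Dis S F) (hpurg : CCS.Purg S R) :
    CCS.Bisim F R := by
  obtain ⟨k, hk, P, h1, h2⟩ := hpurg
  have hP : Ok S P := (ok_self hS (fun _ _ h => h)).nsteps hS h1
  have hfp := hP.finPart hS
  have e : cls (finPart P) = cls R := by
    have := h2.finPart.sound
    simp only [finPart, cls_par, finPart_repl hS, finPart_fin hR, zero_add] at this
    exact this
  have e2 : cls S + cls F = cls S + cls (finPart P) := by
    rw [e]; exact cls_eq.2 h
  have := main_thm hS hseed _ (cls F) ⟨F, hF, rfl⟩ rfl (hdis.qdis hS hF) _ hfp.2 hfp.1 e2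
  exact cls_eq.1 (this.trans e)

end CCS

/-- If `S | F ~ S | R`, `S ⫫ F` and `S ▷ R`, then `F ~ R`. -/
theorem cancel_F_R {A : Type} [Countable A]
    (S F R : CCS.Proc A) (hS : CCS.ReplOnly S) (hseed : CCS.IsSeed S)
    (hF : F.IsFin) (hR : R.IsFin)
    (h : CCS.Bisim (CCS.Proc.par S F) (CCS.Proc.par S R))
    (hdis : CCS.Dis S F) (hpurg : CCS.Purg S R) :
    CCS.Bisim F R := by
  exact CCS.cancel_aux S F R hS hseed hF hR h hdis hpurg
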